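/- The Fermi Golden Rule holds for the φ⁴ kink: with H(x) = tanh(x/√2), Y₁(x) = 2^(-3/4)·√3·tanh(x/√2)·sech(x/√2), and k(x) = e^(2ix)·( 1 + (1/2)·sech²(x/√2) + i·√2·tanh(x/√2) ), one has ∫_ℝ Im(k(x))·H(x)·Y₁(x)² dx ≠ 0. -/

import Mathlib

open MeasureTheory

noncomputable def sech (x : ℝ) : ℝ := 1 / Real.cosh x

noncomputable def Hkink (x : ℝ) : ℝ := Real.tanh (x / Real.sqrt 2)

noncomputable def Y1 (x : ℝ) : ℝ :=
  (2 : ℝ) ^ (-(3 : ℝ) / 4) * Real.sqrt 3 * Real.tanh (x / Real.sqrt 2) * sech (x / Real.sqrt 2)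

noncomputable def kJost (x : ℝ) : ℂ :=
  Complex.exp (2 * Complex.I * (x : ℂ)) *
    (1 + ((1 / 2 * sech (x / Real.sqrt 2) ^ 2 : ℝ) : ℂ)
      + Complex.I * (Real.sqrt 2 : ℂ) * ((Real.tanh (x / Real.sqrt 2) : ℝ) : ℂ))

/-!
Put `u = x / √2`. Since `sech² = 1 - tanh²`, the integrand is, up to a constant, the imaginary part
of `exp (2√2 i u) P(tanh u) sech² u` for a polynomial `P`, so everything reduces to the moments
`M n = ∫ exp (z u) tanhⁿ u sech² u du` at `z = 2√2 i`. The substitution `t = (1 + tanh u) / 2` turns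
`M 0` into a Beta integral, which Euler's reflection formula evaluates as `π z / sin (π z / 2)`, and
integrating the derivative of `exp (z u) tanhⁿ u sech² u` gives
`(n + 2) M (n + 1) = z M n + n M (n - 1)`. The integral then comes out as `-3π / sinh (√2 π)`.
-/

open Set
open Complex (I)
open Real (tanh sigmoid)
open scoped Real

lemma sech_sq (x : ℝ) : sech x ^ 2 = 1 - tanh x ^ 2 := by
  rw [sech, Real.tanh_eq_sinh_div_cosh]
  field_simp
  linear_combination -Real.cosh_sq_sub_sinh_sq x

lemma hasDerivAt_tanh (x : ℝ) : HasDerivAt tanh (sech x ^ 2) x := by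
  have h := (Real.hasDerivAt_sinh x).div (Real.hasDerivAt_cosh x) (Real.cosh_pos x).ne'
  rw [show tanh = Real.sinh / Real.cosh from funext Real.tanh_eq_sinh_div_cosh]
  refine h.congr_deriv ?_
  rw [sech, div_pow]
  congr 1
  linear_combination Real.cosh_sq_sub_sinh_sq x

lemma continuous_tanh : Continuous tanh :=
  continuous_iff_continuousAt.2 fun x ↦ (hasDerivAt_tanh x).continuousAt

lemma hasDerivAt_sech_sq (x : ℝ) :
    HasDerivAt (fun x ↦ sech x ^ 2) (-(2 * tanh x * sech x ^ 2)) x := by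
  simp only [sech_sq]
  refine (((hasDerivAt_tanh x).pow 2).const_sub 1).congr_deriv ?_
  rw [sech_sq]
  ring

lemma sigmoid_two_mul (x : ℝ) : sigmoid (2 * x) = (1 + tanh x) / 2 := by
  have hexp : Real.exp (-(2 * x)) = Real.exp (-x) * Real.exp (-x) := by
    rw [← Real.exp_add]; ring_nf
  rw [Real.sigmoid_def, Real.tanh_eq, hexp, Real.exp_neg]
  field_simp
  ring

lemma sigmoid_two_mul_mul_one_sub (x : ℝ) :
    sigmoid (2 * x) * (1 - sigmoid (2 * x)) = sech x ^ 2 / 4 := by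
  rw [sigmoid_two_mul, sech_sq]
  ring

lemma hasDerivAt_sigmoid_two_mul (x : ℝ) :
    HasDerivAt (fun x ↦ sigmoid (2 * x)) (sech x ^ 2 / 2) x := by
  refine ((Real.hasDerivAt_sigmoid (2 * x)).comp x
    ((hasDerivAt_id x).const_mul 2)).congr_deriv ?_
  rw [sigmoid_two_mul_mul_one_sub]
  ring

lemma log_sigmoid_sub_log_one_sub_sigmoid (x : ℝ) :
    Real.log (sigmoid x) - Real.log (1 - sigmoid x) = x := by
  rw [← Real.sigmoid_neg, ← Real.sigmoid_mul_rexp_neg,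
    Real.log_mul (Real.sigmoid_pos x).ne' (Real.exp_ne_zero _), Real.log_exp]
  ring

lemma sigmoid_cpow_mul_one_sub_sigmoid_cpow_neg (w : ℂ) (x : ℝ) :
    (sigmoid x : ℂ) ^ w * (1 - (sigmoid x : ℂ)) ^ (-w) = Complex.exp (w * x) := by
  have hpos := Real.sigmoid_pos x
  have hpos' : 0 < 1 - sigmoid x := sub_pos.2 (Real.sigmoid_lt_one x)
  have hlog : ((Real.log (sigmoid x) - Real.log (1 - sigmoid x) : ℝ) : ℂ) = x := by
    rw [log_sigmoid_sub_log_one_sub_sigmoid]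
  rw [← Complex.ofReal_one, ← Complex.ofReal_sub,
    Complex.cpow_def_of_ne_zero (by exact_mod_cast hpos.ne'),
    Complex.cpow_def_of_ne_zero (by exact_mod_cast hpos'.ne'), ← Complex.exp_add,
    ← Complex.ofReal_log hpos.le, ← Complex.ofReal_log hpos'.le, ← hlog, Complex.ofReal_sub]
  ring_nf

section ChangeOfVariables

variable {E : Type*} [NormedAddCommGroup E] [NormedSpace ℝ E]

lemma image_sigmoid_two_mul : (fun x : ℝ ↦ sigmoid (2 * x)) '' univ = Ioo 0 1 := by
  rw [image_univ, ← Real.range_sigmoid]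
  exact (mul_left_surjective₀ two_ne_zero).range_comp sigmoid

lemma monotone_sigmoid_two_mul : Monotone fun x : ℝ ↦ sigmoid (2 * x) :=
  Real.sigmoid_monotone.comp (monotone_id.const_mul zero_le_two)

lemma integrableOn_Ioo_iff_integrable_comp_sigmoid (f : ℝ → E) :
    IntegrableOn f (Ioo 0 1) ↔ Integrable fun x ↦ (sech x ^ 2 / 2) • f (sigmoid (2 * x)) := by
  rw [← image_sigmoid_two_mul, integrableOn_image_iff_integrableOn_deriv_smul_of_monotoneOn
    MeasurableSet.univ (fun x _ ↦ (hasDerivAt_sigmoid_two_mul x).hasDerivWithinAt)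
    (monotone_sigmoid_two_mul.monotoneOn _), integrableOn_univ]

lemma setIntegral_Ioo_eq_integral_comp_sigmoid (f : ℝ → E) :
    ∫ t in Ioo 0 1, f t = ∫ x, (sech x ^ 2 / 2) • f (sigmoid (2 * x)) := by
  rw [← image_sigmoid_two_mul, integral_image_eq_integral_deriv_smul_of_monotoneOn
    MeasurableSet.univ (fun x _ ↦ (hasDerivAt_sigmoid_two_mul x).hasDerivWithinAt)
    (monotone_sigmoid_two_mul.monotoneOn _), setIntegral_univ]

end ChangeOfVariables

section Moments

/-- The integrand `exp (z x) tanhⁿ x sech² x` of the moments `tanhMoment z n`. -/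
noncomputable def tanhKernel (z : ℂ) (n : ℕ) (x : ℝ) : ℂ :=
  Complex.exp (z * x) * (tanh x ^ n * sech x ^ 2 : ℝ)

/-- The `n`-th moment of `tanh` under the complex weight `exp (z x) sech² x`: a two-sided Laplace
transform, convergent for `|re z| < 2`, and a Fourier transform for imaginary `z`. -/
noncomputable def tanhMoment (z : ℂ) (n : ℕ) : ℂ := ∫ x, tanhKernel z n x

variable {z : ℂ}

lemma beta_integrand_comp_sigmoid (z : ℂ) (x : ℝ) :
    (sech x ^ 2 / 2) • ((sigmoid (2 * x) : ℂ) ^ (1 + z / 2 - 1) *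
      (1 - (sigmoid (2 * x) : ℂ)) ^ (1 - z / 2 - 1)) = tanhKernel z 0 x / 2 := by
  rw [add_sub_cancel_left, show 1 - z / 2 - 1 = -(z / 2) by ring,
    sigmoid_cpow_mul_one_sub_sigmoid_cpow_neg, tanhKernel, Complex.real_smul]
  push_cast
  ring_nf

lemma tanhMoment_zero_eq_betaIntegral (z : ℂ) :
    tanhMoment z 0 = 2 * Complex.betaIntegral (1 + z / 2) (1 - z / 2) := by
  rw [Complex.betaIntegral, intervalIntegral.integral_of_le zero_le_one,
    integral_Ioc_eq_integral_Ioo, setIntegral_Ioo_eq_integral_comp_sigmoid]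
  simp only [beta_integrand_comp_sigmoid, integral_div]
  rw [tanhMoment, mul_div_cancel₀ _ two_ne_zero]

lemma re_one_add_half_pos (hz : |z.re| < 2) : 0 < (1 + z / 2).re := by
  have := (abs_lt.1 hz).1
  simp only [Complex.add_re, Complex.one_re, Complex.div_ofNat_re]
  linarith

lemma re_one_sub_half_pos (hz : |z.re| < 2) : 0 < (1 - z / 2).re := by
  have := (abs_lt.1 hz).2
  simp only [Complex.sub_re, Complex.one_re, Complex.div_ofNat_re]
  linarith

lemma Gamma_one_add_mul_Gamma_one_sub {w : ℂ} (hw : w ≠ 0) :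
    Complex.Gamma (1 + w) * Complex.Gamma (1 - w) = π * w / Complex.sin (π * w) := by
  rw [add_comm, Complex.Gamma_add_one w hw, mul_assoc, Complex.Gamma_mul_Gamma_one_sub]
  ring

lemma tanhMoment_zero (hz : |z.re| < 2) (hz₀ : z ≠ 0) :
    tanhMoment z 0 = π * z / Complex.sin (π * (z / 2)) := by
  have hbeta := Complex.Gamma_mul_Gamma_eq_betaIntegral
    (re_one_add_half_pos hz) (re_one_sub_half_pos hz)
  rw [Gamma_one_add_mul_Gamma_one_sub (div_ne_zero hz₀ two_ne_zero),
    show 1 + z / 2 + (1 - z / 2) = 2 by ring, Complex.Gamma_ofNat_eq_factorial] at hbeta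
  rw [tanhMoment_zero_eq_betaIntegral, ← one_mul (Complex.betaIntegral _ _)]
  simp only [Nat.factorial_one, Nat.cast_one] at hbeta
  rw [← hbeta]
  ring

lemma integrable_tanhKernel_zero (hz : |z.re| < 2) : Integrable (tanhKernel z 0) := by
  have hbeta := (intervalIntegrable_iff_integrableOn_Ioo_of_le zero_le_one).1
    (Complex.betaIntegral_convergent (re_one_add_half_pos hz) (re_one_sub_half_pos hz))
  rw [integrableOn_Ioo_iff_integrable_comp_sigmoid] at hbeta
  simpa only [beta_integrand_comp_sigmoid, div_mul_cancel₀ _ (two_ne_zero' ℂ)]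
    using hbeta.mul_const 2

lemma integrable_tanhKernel (hz : |z.re| < 2) (n : ℕ) : Integrable (tanhKernel z n) := by
  have hbound (x : ℝ) : ‖((tanh x ^ n : ℝ) : ℂ)‖ ≤ 1 := by
    rw [Complex.norm_real, norm_pow]
    exact pow_le_one₀ (norm_nonneg _) (Real.abs_tanh_lt_one x).le
  have hmeas : AEStronglyMeasurable fun x ↦ ((tanh x ^ n : ℝ) : ℂ) :=
    (Complex.continuous_ofReal.comp (continuous_tanh.pow n)).aestronglyMeasurable
  refine ((integrable_tanhKernel_zero hz).mul_bdd hmeas (.of_forall hbound)).congr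
    (.of_forall fun x ↦ ?_)
  simp only [tanhKernel]
  push_cast
  ring

lemma integrable_const_mul_tanhKernel (hz : |z.re| < 2) (n : ℕ) (c : ℂ) :
    Integrable fun x ↦ c * tanhKernel z n x :=
  (integrable_tanhKernel hz n).const_mul c

lemma hasDerivAt_tanh_pow_mul_sech_sq (n : ℕ) (x : ℝ) :
    HasDerivAt (fun x ↦ tanh x ^ n * sech x ^ 2)
      (n * (tanh x ^ (n - 1) * sech x ^ 2) - (n + 2) * (tanh x ^ (n + 1) * sech x ^ 2)) x := by
  refine (((hasDerivAt_tanh x).pow n).mul (hasDerivAt_sech_sq x)).congr_deriv ?_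
  cases n with
  | zero =>
    simp only [Pi.pow_apply, pow_zero, CharP.cast_eq_zero]
    ring
  | succ n =>
    simp only [Nat.add_sub_cancel, Pi.pow_apply, sech_sq]
    ring

lemma hasDerivAt_tanhKernel (z : ℂ) (n : ℕ) (x : ℝ) :
    HasDerivAt (tanhKernel z n)
      (z * tanhKernel z n x + n * tanhKernel z (n - 1) x - (n + 2) * tanhKernel z (n + 1) x) x := by
  have hexp : HasDerivAt (fun x : ℝ ↦ Complex.exp (z * x)) (Complex.exp (z * x) * (z * 1)) x :=
    ((hasDerivAt_id x).ofReal_comp.const_mul z).cexp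
  refine (hexp.mul (hasDerivAt_tanh_pow_mul_sech_sq n x).ofReal_comp).congr_deriv ?_
  simp only [tanhKernel]
  push_cast
  ring

/-- For `n = 0` the truncated index `n - 1` is harmless: its coefficient vanishes. -/
lemma tanhMoment_add_one (hz : |z.re| < 2) (n : ℕ) :
    (n + 2) * tanhMoment z (n + 1) = z * tanhMoment z n + n * tanhMoment z (n - 1) := by
  have hint (m : ℕ) (c : ℂ) := integrable_const_mul_tanhKernel hz m c
  have hadd := (hint n z).fun_add (hint (n - 1) n)
  have hzero := integral_eq_zero_of_hasDerivAt_of_integrable (hasDerivAt_tanhKernel z n)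
    (hadd.sub (hint (n + 1) (n + 2))) (integrable_tanhKernel hz n)
  rw [integral_sub hadd (hint _ _), integral_add (hint _ _) (hint _ _)] at hzero
  simp only [integral_const_mul] at hzero
  exact (sub_eq_zero.1 hzero).symm

end Moments

/-- The exponent for which `exp (2 i x) = exp (z u)` in the kink variable `u = x / √2`. -/
noncomputable def kinkExponent : ℂ := 2 * √2 * I

lemma abs_re_kinkExponent_lt_two : |kinkExponent.re| < 2 := by
  simp [kinkExponent]

lemma ofReal_sqrt_two_sq : (√2 : ℂ) ^ 2 = 2 := by
  exact_mod_cast Real.sq_sqrt zero_le_two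

lemma tanhMoment_kinkExponent_zero :
    tanhMoment kinkExponent 0 = (2 * √2 * π / Real.sinh (√2 * π) : ℝ) := by
  have hne : kinkExponent ≠ 0 := by simp [kinkExponent]
  have harg : π * (kinkExponent / 2) = (√2 * π : ℝ) * I := by
    rw [kinkExponent]; push_cast; ring
  rw [tanhMoment_zero abs_re_kinkExponent_lt_two hne, harg, Complex.sin_mul_I, kinkExponent,
    ← mul_assoc, mul_div_mul_right _ _ Complex.I_ne_zero]
  push_cast
  ring

lemma tanhMoment_kinkExponent_combination :
    3 / 2 * tanhMoment kinkExponent 3 + √2 * I * tanhMoment kinkExponent 4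
      - 1 / 2 * tanhMoment kinkExponent 5 = -(√2 / 2 * I) * tanhMoment kinkExponent 0 := by
  have hrec (n : ℕ) := tanhMoment_add_one abs_re_kinkExponent_lt_two n
  generalize tanhMoment kinkExponent = M at *
  rw [kinkExponent] at hrec
  have hsq : (√2 * I : ℂ) ^ 2 = -2 := by
    rw [mul_pow, ofReal_sqrt_two_sq, Complex.I_sq]; ring
  have hM₁ : M 1 = √2 * I * M 0 := by
    linear_combination hrec 0 / 2
  have hM₂ : M 2 = -M 0 := by
    linear_combination hrec 1 / 3 + 2 / 3 * √2 * I * hM₁ + 2 / 3 * M 0 * hsq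
  have hM₃ : M 3 = 0 := by
    linear_combination hrec 2 / 4 + 1 / 2 * √2 * I * hM₂ + 1 / 2 * hM₁
  have hM₄ : M 4 = -(3 / 5) * M 0 := by
    linear_combination hrec 3 / 5 + 2 / 5 * √2 * I * hM₃ + 3 / 5 * hM₂
  have hM₅ : M 5 = -(√2 / 5 * I) * M 0 := by
    linear_combination hrec 4 / 6 + 1 / 3 * √2 * I * hM₄ + 2 / 3 * hM₃
  rw [hM₃, hM₄, hM₅]
  ring

lemma Y1_sq (x : ℝ) : Y1 x ^ 2 = 3 * √2 / 4 * (tanh (x / √2) ^ 2 * sech (x / √2) ^ 2) := by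
  have htwo : ((2 : ℝ) ^ (-(3 : ℝ) / 4)) ^ 2 = √2 / 4 := by
    rw [← Real.rpow_natCast, ← Real.rpow_mul zero_le_two, Real.sqrt_eq_rpow,
      show (4 : ℝ) = 2 ^ (2 : ℝ) by norm_num, ← Real.rpow_sub zero_lt_two]
    norm_num
  rw [Y1, mul_pow, mul_pow, mul_pow, htwo, Real.sq_sqrt zero_le_three]
  ring

/-- The Fermi Golden Rule integrand, up to the factor `3 √2 / 4` and before taking imaginary parts,
in the kink variable `u = x / √2`. The coefficients come from `sech² = 1 - tanh²`, which turns the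
amplitude of `kJost` into `3 / 2 + i √2 tanh u - tanh² u / 2`. -/
noncomputable def resonanceKernel (u : ℝ) : ℂ :=
  3 / 2 * tanhKernel kinkExponent 3 u + √2 * I * tanhKernel kinkExponent 4 u
    - 1 / 2 * tanhKernel kinkExponent 5 u

lemma kJost_mul_tanh_pow_mul_sech_sq (x : ℝ) :
    kJost x * (tanh (x / √2) ^ 3 * sech (x / √2) ^ 2 : ℝ) = resonanceKernel (x / √2) := by
  have hexp : kinkExponent * (x / √2 : ℝ) = 2 * I * x := by
    have : (√2 : ℂ) ≠ 0 := by simp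
    rw [kinkExponent]
    push_cast
    field_simp
  rw [kJost, resonanceKernel, tanhKernel, tanhKernel, tanhKernel, hexp, sech_sq]
  push_cast
  ring

lemma im_kJost_mul_Hkink_mul_Y1_sq (x : ℝ) :
    (kJost x).im * Hkink x * Y1 x ^ 2 = 3 * √2 / 4 * (resonanceKernel (x / √2)).im := by
  rw [← kJost_mul_tanh_pow_mul_sech_sq, Complex.im_mul_ofReal, Y1_sq, Hkink]
  ring

lemma integrable_resonanceKernel : Integrable resonanceKernel :=
  have hint := integrable_const_mul_tanhKernel abs_re_kinkExponent_lt_two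
  ((hint 3 _).add (hint 4 _)).sub (hint 5 _)

lemma integral_resonanceKernel :
    ∫ u, resonanceKernel u = -(√2 / 2 * I) * tanhMoment kinkExponent 0 := by
  have hint := integrable_const_mul_tanhKernel abs_re_kinkExponent_lt_two
  simp only [resonanceKernel]
  rw [integral_sub ((hint 3 _).fun_add (hint 4 _)) (hint 5 _), integral_add (hint 3 _) (hint 4 _)]
  simp only [integral_const_mul]
  exact tanhMoment_kinkExponent_combination

lemma im_integral_resonanceKernel :
    (∫ u, resonanceKernel u).im = -(2 * π / Real.sinh (√2 * π)) := by
  rw [integral_resonanceKernel, tanhMoment_kinkExponent_zero, Complex.im_mul_ofReal]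
  have hcoeff : (-(√2 / 2 * I) : ℂ).im = -(√2 / 2) := by
    simp
  rw [hcoeff]
  linear_combination -(π / Real.sinh (√2 * π)) * Real.sq_sqrt zero_le_two

lemma integral_im_kJost_mul_Hkink_mul_Y1_sq :
    ∫ x, (kJost x).im * Hkink x * Y1 x ^ 2 = -(3 * π / Real.sinh (√2 * π)) := by
  calc ∫ x, (kJost x).im * Hkink x * Y1 x ^ 2
      = 3 * √2 / 4 * ∫ x, (resonanceKernel (x / √2)).im := by
        simp only [im_kJost_mul_Hkink_mul_Y1_sq, integral_const_mul]
    _ = 3 * √2 / 4 * (√2 * ∫ u, (resonanceKernel u).im) := by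
        rw [Measure.integral_comp_div (fun u ↦ (resonanceKernel u).im) √2,
          abs_of_nonneg (Real.sqrt_nonneg 2), smul_eq_mul]
    _ = 3 * √2 / 4 * (√2 * (∫ u, resonanceKernel u).im) := by
        congr 2
        exact integral_im integrable_resonanceKernel
    _ = -(3 * π / Real.sinh (√2 * π)) := by
        rw [im_integral_resonanceKernel]
        linear_combination
          -(3 / 2 * π / Real.sinh (√2 * π)) * Real.sq_sqrt zero_le_two

theorem fermi_golden_rule :
    (∫ x : ℝ, (kJost x).im * Hkink x * (Y1 x) ^ 2) ≠ 0 := by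
  rw [integral_im_kJost_mul_Hkink_mul_Y1_sq]
  have hsinh : 0 < Real.sinh (√2 * π) := Real.sinh_pos_iff.2 (by positivity)
  exact neg_ne_zero.2 (div_pos (by positivity) hsinh).ne'
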